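/- For every complex number q with 0 < |q| < 1, one has ∑_{i,j,k,l ≥ 0} q^{2i²+2j²+2k²+2l²−2il−2jl−2kl−2k+l} / ((q⁴;q⁴)_i (q⁴;q⁴)_j (q⁴;q⁴)_k (q⁴;q⁴)_l) = 2 J_4³ J_12² / (J_2³ J_8 J_24) + 4q · J_6 J_8 J_24 / (J_2² J_12). (This is the paper's identity F(1, 1, q^{−1}, q^{1/2}; q²) = 2 J_2³ J_6²/(J_1³ J_4 J_12) + 4q^{1/2} J_3 J_4 J_12/(J_1² J_6), with q replaced by q² throughout to clear half-integer exponents.) -/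

import Mathlib

open scoped BigOperators

/-- The infinite q-Pochhammer symbol `(a; q)_∞ = ∏_{k=0}^∞ (1 - a q^k)`. -/
noncomputable def qPochInf (a q : ℂ) : ℂ := ∏' n : ℕ, (1 - a * q ^ n)

/-- The finite q-Pochhammer symbol `(a; q)_n = ∏_{k=0}^{n-1} (1 - a q^k)`. -/
noncomputable def qPoch (a q : ℂ) (n : ℕ) : ℂ :=
  Finset.prod (Finset.range n) (fun k => 1 - a * q ^ k)

/-- `J_m = (q^m; q^m)_∞`. -/
noncomputable def J (q : ℂ) (m : ℕ) : ℂ := qPochInf (q ^ m) (q ^ m)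

/-- `J_{a,m} = (q^a; q^m)_∞ (q^{m-a}; q^m)_∞ (q^m; q^m)_∞`. -/
noncomputable def Jam (q : ℂ) (a m : ℕ) : ℂ :=
  qPochInf (q ^ a) (q ^ m) * qPochInf (q ^ (m - a)) (q ^ m) * qPochInf (q ^ m) (q ^ m)

/-!
Put `Y = q ^ 2`. Euler's identity sums the quadruple series over `i`, `j`, `k` and leaves a series
over `l` with the factors `(-Y ^ (1 - l); Y²)_∞ ^ 2 (-Y ^ (-l); Y²)_∞`. Up to a power of `Y`, such a
shifted product is a finite `q`-Pochhammer symbol times an infinite one that depends only on the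
parity of `l`. So the even and the odd `l` yield multiples of the two series
`∑ Y ^ (n²) (-Y; Y²)_n / (Y; Y)_{2n}` and `∑ Y ^ (n² + n) (-Y²; Y²)_n / (Y; Y)_{2n+1}`.

For `e = 0, 1`, the reciprocal `1 / (Y; Y)_{2n+e}` is a sum over `r` of powers of `Y` with
triangular exponents times `1 / ((Y²; Y²)_{n-r} (Y²; Y²)_{n+r+e})`, that is, it belongs to a Bailey
pair. After exchanging the summations the sum over `n` has a closed form, and the remaining theta
series over `r` is evaluated by the Jacobi triple product.
-/

open Finset Filter Topology

section QPochhammer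

lemma norm_pow_lt_one {Q : ℂ} (hQ : ‖Q‖ < 1) {n : ℕ} (hn : n ≠ 0) : ‖Q ^ n‖ < 1 := by
  simpa only [norm_pow] using pow_lt_one₀ (norm_nonneg Q) hQ hn

lemma qPoch_zero (a Q : ℂ) : qPoch a Q 0 = 1 := prod_range_zero _

lemma qPoch_succ (a Q : ℂ) (n : ℕ) : qPoch a Q (n + 1) = qPoch a Q n * (1 - a * Q ^ n) :=
  prod_range_succ _ n

lemma qPoch_add (a Q : ℂ) (m n : ℕ) :
    qPoch a Q (m + n) = qPoch a Q m * qPoch (a * Q ^ m) Q n := by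
  simp only [qPoch, prod_range_add, pow_add, mul_assoc]

lemma qPoch_mul_index (a Q : ℂ) (m n : ℕ) :
    qPoch a Q (m * n) = ∏ j ∈ range m, qPoch (a * Q ^ j) (Q ^ m) n := by
  induction n with
  | zero => simp only [mul_zero, qPoch_zero, prod_const_one]
  | succ n ih =>
    simp only [mul_add_one, qPoch_add, ih, qPoch_succ, prod_mul_distrib]
    congr 1
    exact prod_congr rfl fun j _ => by rw [pow_mul, mul_right_comm]

lemma qPoch_two_mul (a Q : ℂ) (n : ℕ) :
    qPoch a Q (2 * n) = qPoch a (Q ^ 2) n * qPoch (a * Q) (Q ^ 2) n := by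
  rw [qPoch_mul_index, prod_range_succ, prod_range_one, pow_zero, pow_one, mul_one]

lemma qPoch_mul_qPoch_neg (a Q : ℂ) (n : ℕ) :
    qPoch a Q n * qPoch (-a) Q n = qPoch (a ^ 2) (Q ^ 2) n := by
  simp only [qPoch, ← prod_mul_distrib]
  exact prod_congr rfl fun k _ => by ring

lemma qPoch_ne_zero {a Q : ℂ} (ha : ‖a‖ < 1) (hQ : ‖Q‖ < 1) (n : ℕ) : qPoch a Q n ≠ 0 := by
  refine prod_ne_zero_iff.mpr fun k _ h => ?_
  have hlt : ‖a * Q ^ k‖ < 1 := by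
    rw [norm_mul, norm_pow]
    exact mul_lt_one_of_nonneg_of_lt_one_left (norm_nonneg a) ha
      (pow_le_one₀ (norm_nonneg Q) hQ.le)
  rw [← sub_eq_zero.mp h, norm_one] at hlt
  exact hlt.false

variable {Q : ℂ} (hQ : ‖Q‖ < 1)
include hQ

lemma summable_norm_neg_mul_pow (a : ℂ) : Summable fun n : ℕ => ‖-(a * Q ^ n)‖ := by
  simpa only [norm_neg, norm_mul, norm_pow] using
    (summable_geometric_of_lt_one (norm_nonneg Q) hQ).mul_left ‖a‖

lemma multipliable_one_sub_mul_pow (a : ℂ) : Multipliable fun n : ℕ => 1 - a * Q ^ n := by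
  simpa only [sub_eq_add_neg] using
    multipliable_one_add_of_summable (summable_norm_neg_mul_pow hQ a)

lemma tendsto_qPoch (a : ℂ) : Tendsto (qPoch a Q) atTop (𝓝 (qPochInf a Q)) :=
  (multipliable_one_sub_mul_pow hQ a).tendsto_prod_tprod_nat

lemma qPochInf_ne_zero {a : ℂ} (ha : ‖a‖ < 1) : qPochInf a Q ≠ 0 := by
  have hfactor (n : ℕ) : 1 + -(a * Q ^ n) ≠ 0 := by
    have h := qPoch_ne_zero ha hQ (n + 1)
    rw [qPoch_succ, sub_eq_add_neg] at h
    exact right_ne_zero_of_mul h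
  simpa only [qPochInf, sub_eq_add_neg] using
    tprod_one_add_ne_zero_of_summable hfactor (summable_norm_neg_mul_pow hQ a)

lemma qPoch_mul_qPochInf (a : ℂ) (n : ℕ) :
    qPoch a Q n * qPochInf (a * Q ^ n) Q = qPochInf a Q := by
  have hshift := (tendsto_qPoch hQ a).comp (tendsto_add_atTop_nat n)
  refine tendsto_nhds_unique (((tendsto_qPoch hQ (a * Q ^ n)).const_mul _).congr fun k => ?_) hshift
  rw [Function.comp_apply, add_comm, qPoch_add]

lemma qPochInf_eq_prod (a : ℂ) {m : ℕ} (hm : m ≠ 0) :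
    qPochInf a Q = ∏ j ∈ range m, qPochInf (a * Q ^ j) (Q ^ m) := by
  have hsub := (tendsto_qPoch hQ a).comp
    (tendsto_id.const_mul_atTop' (Nat.pos_of_ne_zero hm))
  refine tendsto_nhds_unique hsub ((tendsto_finsetProd _ fun j _ =>
    tendsto_qPoch (norm_pow_lt_one hQ hm) (a * Q ^ j)).congr fun n => ?_)
  exact (qPoch_mul_index a Q m n).symm

lemma qPochInf_mul_qPochInf_neg (a : ℂ) :
    qPochInf a Q * qPochInf (-a) Q = qPochInf (a ^ 2) (Q ^ 2) := by
  refine tendsto_nhds_unique ((tendsto_qPoch hQ a).mul (tendsto_qPoch hQ (-a))) ?_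
  simp only [qPoch_mul_qPoch_neg]
  exact tendsto_qPoch (norm_pow_lt_one hQ two_ne_zero) _

lemma qPochInf_neg_one : qPochInf (-1) Q = 2 * qPochInf (-Q) Q := by
  rw [← qPoch_mul_qPochInf hQ (-1) 1, qPoch_succ, qPoch_zero, pow_one, neg_one_mul]
  norm_num

lemma qPochInf_pow_succ_div (n : ℕ) :
    qPochInf (Q ^ (n + 1)) Q / qPochInf Q Q = (qPoch Q Q n)⁻¹ := by
  rw [← qPoch_mul_qPochInf hQ Q n, ← pow_succ']
  refine div_mul_cancel_right₀ (qPochInf_ne_zero hQ (norm_pow_lt_one hQ n.succ_ne_zero)) _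

lemma exists_norm_qPoch_le (a : ℂ) : ∃ C, ∀ n, ‖qPoch a Q n‖ ≤ C := by
  obtain ⟨C, hC⟩ := (Metric.isBounded_range_of_tendsto _ (tendsto_qPoch hQ a)).exists_norm_le
  exact ⟨C, fun n => hC _ ⟨n, rfl⟩⟩

lemma tendsto_inv_qPoch_self : Tendsto (fun n => (qPoch Q Q n)⁻¹) atTop (𝓝 (qPochInf Q Q)⁻¹) :=
  (tendsto_qPoch hQ Q).inv₀ (qPochInf_ne_zero hQ hQ)

lemma exists_norm_inv_qPoch_self_le : ∃ C, ∀ n, ‖(qPoch Q Q n)⁻¹‖ ≤ C := by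
  obtain ⟨C, hC⟩ :=
    (Metric.isBounded_range_of_tendsto _ (tendsto_inv_qPoch_self hQ)).exists_norm_le
  exact ⟨C, fun n => hC _ ⟨n, rfl⟩⟩

end QPochhammer

section FiniteIdentities

variable {Q : ℂ} (hne : ∀ n, qPoch Q Q n ≠ 0)
include hne

lemma one_sub_pow_succ_ne_zero (n : ℕ) : 1 - Q ^ (n + 1) ≠ 0 := by
  have h := hne (n + 1)
  rw [qPoch_succ, ← pow_succ'] at h
  exact right_ne_zero_of_mul h

lemma one_sub_pow_succ_div_qPoch_succ (n : ℕ) :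
    (1 - Q ^ (n + 1)) / qPoch Q Q (n + 1) = (qPoch Q Q n)⁻¹ := by
  rw [qPoch_succ, ← pow_succ', div_mul_cancel_right₀ (one_sub_pow_succ_ne_zero hne n)]

-- `1 - Q ^ s` and `1 - Q ^ t` each cancel against the last factor of one denominator.  Since
-- `1 - Q ^ (s + t) = (1 - Q ^ s) + Q ^ s * (1 - Q ^ t) = Q ^ t * (1 - Q ^ s) + (1 - Q ^ t)`,
-- this turns a closed form at `N` into one at `N + 1`.
lemma one_sub_pow_succ_mul_sum_antidiagonal {F f g : ℕ → ℕ → ℂ}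
    (hF : ∀ s t, (1 - Q ^ (s + t)) * F s t = f s t * (1 - Q ^ s) + g s t * (1 - Q ^ t)) (N : ℕ) :
    (1 - Q ^ (N + 1)) * ∑ p ∈ antidiagonal (N + 1), F p.1 p.2 / (qPoch Q Q p.1 * qPoch Q Q p.2) =
      ∑ p ∈ antidiagonal N, (f (p.1 + 1) p.2 + g p.1 (p.2 + 1)) /
        (qPoch Q Q p.1 * qPoch Q Q p.2) := by
  have hcancel (x y : ℂ) (n : ℕ) :
      x * (1 - Q ^ (n + 1)) / (y * qPoch Q Q (n + 1)) = x / (y * qPoch Q Q n) := by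
    rw [mul_div_mul_comm, one_sub_pow_succ_div_qPoch_succ hne, ← div_eq_mul_inv, div_div]
  have hsplit : ∀ p ∈ antidiagonal (N + 1),
      (1 - Q ^ (N + 1)) * (F p.1 p.2 / (qPoch Q Q p.1 * qPoch Q Q p.2)) =
        f p.1 p.2 * (1 - Q ^ p.1) / (qPoch Q Q p.2 * qPoch Q Q p.1) +
        g p.1 p.2 * (1 - Q ^ p.2) / (qPoch Q Q p.1 * qPoch Q Q p.2) := by
    intro p hp
    rw [← mem_antidiagonal.mp hp, ← mul_div_assoc, hF, add_div, mul_comm (qPoch Q Q p.2)]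
  simp only [mul_sum, add_div, sum_add_distrib, sum_congr rfl hsplit]
  rw [Nat.sum_antidiagonal_succ, Nat.sum_antidiagonal_succ']
  simp only [pow_zero, sub_self, mul_zero, zero_div, zero_add, hcancel]
  simp only [mul_comm]

lemma sum_antidiagonal_qPoch_mul_pow (a : ℂ) (N : ℕ) :
    ∑ p ∈ antidiagonal N, qPoch a Q p.1 * a ^ p.2 / (qPoch Q Q p.1 * qPoch Q Q p.2) =
      (qPoch Q Q N)⁻¹ := by
  induction N with
  | zero => simp [qPoch_zero]
  | succ N ih =>
    apply mul_left_cancel₀ (one_sub_pow_succ_ne_zero hne N)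
    rw [← div_eq_mul_inv, one_sub_pow_succ_div_qPoch_succ hne, ← ih,
      one_sub_pow_succ_mul_sum_antidiagonal hne (F := fun s t => qPoch a Q s * a ^ t)
        (f := fun s t => qPoch a Q s * a ^ t) (g := fun s t => Q ^ s * (qPoch a Q s * a ^ t))
        (fun s t => by ring)]
    refine sum_congr rfl fun p _ => ?_
    rw [qPoch_succ]
    ring

end FiniteIdentities

section FiniteIdentitiesNome

variable {Y : ℂ} (hne : ∀ n, qPoch (Y ^ 2) (Y ^ 2) n ≠ 0)
include hne

lemma sum_antidiagonal_pow_sq_mul_pow (z : ℂ) (N : ℕ) :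
    ∑ p ∈ antidiagonal N, Y ^ p.1 ^ 2 * z ^ p.1 /
        (qPoch (Y ^ 2) (Y ^ 2) p.1 * qPoch (Y ^ 2) (Y ^ 2) p.2) =
      qPoch (-(z * Y)) (Y ^ 2) N / qPoch (Y ^ 2) (Y ^ 2) N := by
  induction N with
  | zero => simp [qPoch_zero]
  | succ N ih =>
    apply mul_left_cancel₀ (one_sub_pow_succ_ne_zero hne N)
    rw [mul_div_left_comm, one_sub_pow_succ_div_qPoch_succ hne, qPoch_succ, mul_right_comm,
      ← div_eq_mul_inv, ← ih, sum_mul,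
      one_sub_pow_succ_mul_sum_antidiagonal hne (F := fun s _ => Y ^ s ^ 2 * z ^ s)
        (f := fun s t => (Y ^ 2) ^ t * (Y ^ s ^ 2 * z ^ s)) (g := fun s _ => Y ^ s ^ 2 * z ^ s)
        (fun s t => by ring)]
    refine sum_congr rfl fun p hp => ?_
    rw [← mem_antidiagonal.mp hp]
    ring

end FiniteIdentitiesNome

/-- The triangular number `d (d + 1) / 2` of an integer `d`; the division is exact. -/
def triangle (d : ℤ) : ℤ := d * (d + 1) / 2

lemma triangle_neg_sub_one (d : ℤ) : triangle (-d - 1) = triangle d := by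
  unfold triangle
  congr 1
  ring

lemma triangle_succ (d : ℤ) : triangle (d + 1) = triangle d + (d + 1) := by
  rw [triangle, triangle, ← Int.add_mul_ediv_right _ _ two_ne_zero]
  congr 1
  ring

-- Inverting the base, this evaluates the Rogers–Szegő polynomial in base `Y ^ 2` at `Y`.
lemma sum_antidiagonal_zpow_triangle {Y : ℂ} (hY : Y ≠ 0)
    (hne : ∀ n, qPoch (Y ^ 2) (Y ^ 2) n ≠ 0) (N : ℕ) :
    ∑ p ∈ antidiagonal N, Y ^ triangle ((p.2 : ℤ) - p.1) /
        (qPoch (Y ^ 2) (Y ^ 2) p.1 * qPoch (Y ^ 2) (Y ^ 2) p.2) =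
      (qPoch Y Y N)⁻¹ := by
  have hne' (n : ℕ) : qPoch Y Y n ≠ 0 :=
    left_ne_zero_of_mul (qPoch_mul_qPoch_neg Y Y n ▸ hne n)
  induction N with
  | zero => simp [qPoch_zero, triangle]
  | succ N ih =>
    have hswap : ∑ p ∈ antidiagonal N, Y ^ triangle ((p.1 : ℤ) - p.2) /
          (qPoch (Y ^ 2) (Y ^ 2) p.1 * qPoch (Y ^ 2) (Y ^ 2) p.2) = (qPoch Y Y N)⁻¹ := by
      rw [← ih, ← Nat.sum_antidiagonal_swap]
      exact sum_congr rfl fun p _ => congrArg _ (mul_comm _ _)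
    apply mul_left_cancel₀ (one_sub_pow_succ_ne_zero hne N)
    calc (1 - (Y ^ 2) ^ (N + 1)) * ∑ p ∈ antidiagonal (N + 1), Y ^ triangle ((p.2 : ℤ) - p.1) /
          (qPoch (Y ^ 2) (Y ^ 2) p.1 * qPoch (Y ^ 2) (Y ^ 2) p.2)
        = ∑ p ∈ antidiagonal N, (Y ^ triangle ((p.1 : ℤ) - p.2) +
              Y ^ (N + 1) * Y ^ triangle ((p.2 : ℤ) - p.1)) /
            (qPoch (Y ^ 2) (Y ^ 2) p.1 * qPoch (Y ^ 2) (Y ^ 2) p.2) := by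
          rw [one_sub_pow_succ_mul_sum_antidiagonal hne (F := fun s t => Y ^ triangle (t - s))
            (f := fun s t => Y ^ triangle (t - s))
            (g := fun s t => (Y ^ 2) ^ s * Y ^ triangle (t - s)) (fun s t => by ring)]
          refine sum_congr rfl fun p hp => ?_
          rw [← mem_antidiagonal.mp hp, ← triangle_neg_sub_one (p.1 - p.2), Nat.cast_succ,
            Nat.cast_succ, add_sub_right_comm, triangle_succ, zpow_add₀ hY]
          congr 2
          · congr 2; ring
          · simp only [← zpow_natCast, ← zpow_mul, ← zpow_add₀ hY]
            congr 1; push_cast; ring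
      _ = (1 + Y ^ (N + 1)) * (qPoch Y Y N)⁻¹ := by
          simp only [add_div, sum_add_distrib, hswap, mul_div_assoc, ← mul_sum, ih]
          ring
      _ = (1 - (Y ^ 2) ^ (N + 1)) * (qPoch Y Y (N + 1))⁻¹ := by
          rw [← one_sub_pow_succ_div_qPoch_succ hne']
          ring

section InfiniteSums

variable {ι κ : Type*}

lemma summable_mul_mul_of_norm_le {u : ι → ℂ} {v : κ → ℂ} {K : ι → κ → ℂ} {C : ℝ}
    (hu : Summable fun i => ‖u i‖) (hv : Summable fun j => ‖v j‖) (hK : ∀ i j, ‖K i j‖ ≤ C) :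
    Summable fun p : ι × κ => u p.1 * v p.2 * K p.1 p.2 := by
  refine Summable.of_norm_bounded ((hu.mul_norm hv).mul_right C) fun p => ?_
  rw [norm_mul]
  gcongr
  exact hK p.1 p.2

lemma tsum_eq_tsum_even_add_tsum_odd {f : ℕ → ℂ} (hf : Summable f) :
    ∑' n, f n = ∑' m, f (2 * m) + ∑' m, f (2 * m + 1) :=
  (tsum_even_add_odd (hf.comp_injective (mul_right_injective₀ two_ne_zero))
    (hf.comp_injective ((add_left_injective 1).comp (mul_right_injective₀ two_ne_zero)))).symm

lemma hasSum_mul_mul_of_summable_norm {μ : Type*} {u : ι → ℂ} {v : κ → ℂ} {w : μ → ℂ}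
    (hu : Summable fun i => ‖u i‖) (hv : Summable fun j => ‖v j‖) (hw : Summable fun k => ‖w k‖) :
    HasSum (fun p : ι × κ × μ => u p.1 * (v p.2.1 * w p.2.2))
      ((∑' i, u i) * ((∑' j, v j) * ∑' k, w k)) := by
  rw [tsum_mul_tsum_of_summable_norm hv hw, tsum_mul_tsum_of_summable_norm hu (hv.mul_norm hw)]
  exact (summable_mul_of_summable_norm hu (hv.mul_norm hw)).hasSum

lemma tsum_mul_tsum_comm {u : ι → ℂ} {v : κ → ℂ} {K : ι → κ → ℂ} {C : ℝ}
    (hu : Summable fun i => ‖u i‖) (hv : Summable fun j => ‖v j‖) (hK : ∀ i j, ‖K i j‖ ≤ C) :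
    ∑' i, u i * ∑' j, v j * K i j = ∑' j, v j * ∑' i, u i * K i j := by
  simp only [← tsum_mul_left, ← mul_assoc]
  rw [← Summable.tsum_comm (f := fun i j => u i * v j * K i j)
    (summable_mul_mul_of_norm_le hu hv hK)]
  simp only [mul_comm (u _)]

lemma tendsto_tsum_mul_of_norm_le {u : ι → ℂ} {K : ℕ → ι → ℂ} {L : ℂ} {C : ℝ}
    (hu : Summable fun i => ‖u i‖) (hK : ∀ n i, ‖K n i‖ ≤ C)
    (hL : ∀ i, Tendsto (fun n => K n i) atTop (𝓝 L)) :
    Tendsto (fun n => ∑' i, u i * K n i) atTop (𝓝 ((∑' i, u i) * L)) := by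
  rw [← tsum_mul_right]
  refine tendsto_tsum_of_dominated_convergence (hu.mul_right C)
    (fun i => (hL i).const_mul (u i)) (Eventually.of_forall fun n i => ?_)
  rw [norm_mul]
  gcongr
  exact hK n i

lemma tsum_prod_eq_tsum_sum_antidiagonal {F : ℕ × ℕ → ℂ} (hF : Summable F) :
    ∑' p, F p = ∑' n, ∑ p ∈ antidiagonal n, F p := by
  have hsigma := HasAntidiagonal.sigmaAntidiagonalEquivProd.summable_iff.mpr hF
  rw [← HasAntidiagonal.sigmaAntidiagonalEquivProd.tsum_eq F]
  refine (hsigma.tsum_sigma' fun _ => (hasSum_fintype _).summable).trans (tsum_congr fun n => ?_)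
  rw [tsum_fintype]
  exact sum_coe_sort _ F

variable {Y : ℂ} (hY : ‖Y‖ < 1)
include hY

lemma summable_norm_pow_sq_mul_pow (z : ℂ) : Summable fun n : ℕ => ‖Y ^ n ^ 2 * z ^ n‖ := by
  have hlim : Tendsto (fun n : ℕ => ‖Y ^ n * z‖) atTop (𝓝 0) := by
    simpa using ((tendsto_pow_atTop_nhds_zero_of_norm_lt_one hY).mul_const z).norm
  refine Summable.of_norm_bounded_eventually_nat summable_geometric_two ?_
  filter_upwards [hlim.eventually_le_const one_half_pos] with n hn
  rw [norm_norm, sq, pow_mul, ← mul_pow, norm_pow]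
  gcongr

lemma summable_norm_zpow_sq_mul_zpow (z : ℂ) : Summable fun n : ℤ => ‖Y ^ n ^ 2 * z ^ n‖ := by
  refine Summable.of_nat_of_neg ?_ ?_
  · simpa only [← Nat.cast_pow, zpow_natCast] using summable_norm_pow_sq_mul_pow hY z
  · simpa only [neg_sq, zpow_neg, ← inv_pow, ← Nat.cast_pow, zpow_natCast] using
      summable_norm_pow_sq_mul_pow hY z⁻¹

end InfiniteSums

section InvQPoch

/-- The reciprocal `1 / (Q; Q)_m` for an integer index `m`, extended by `0` to `m < 0`; this is the
value for which the recurrence `(1 - Q ^ m) / (Q; Q)_m = 1 / (Q; Q)_{m-1}` holds at every `m`. -/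
noncomputable def invQPoch (Q : ℂ) (m : ℤ) : ℂ := if 0 ≤ m then (qPoch Q Q m.toNat)⁻¹ else 0

lemma invQPoch_natCast (Q : ℂ) (m : ℕ) : invQPoch Q m = (qPoch Q Q m)⁻¹ := by simp [invQPoch]

lemma invQPoch_of_neg (Q : ℂ) {m : ℤ} (hm : m < 0) : invQPoch Q m = 0 := if_neg hm.not_ge

lemma tsum_mul_invQPoch_sub (Q : ℂ) (u : ℕ → ℂ) (N : ℕ) :
    ∑' s : ℕ, u s * invQPoch Q (N - s) = ∑ p ∈ antidiagonal N, u p.1 / qPoch Q Q p.2 := by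
  rw [Nat.sum_antidiagonal_eq_sum_range_succ_mk, tsum_eq_sum (s := range N.succ)]
  · refine sum_congr rfl fun s hs => ?_
    rw [← Nat.cast_sub (mem_range_succ_iff.mp hs), invQPoch_natCast, div_eq_mul_inv]
  · intro s hs
    rw [invQPoch_of_neg Q (by rw [mem_range_succ_iff] at hs; omega), mul_zero]

variable {Q : ℂ} (hQ : ‖Q‖ < 1)
include hQ

lemma exists_norm_invQPoch_le : ∃ C, ∀ m, ‖invQPoch Q m‖ ≤ C := by
  obtain ⟨C, hC⟩ := exists_norm_inv_qPoch_self_le hQ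
  refine ⟨C, fun m => ?_⟩
  unfold invQPoch
  split_ifs
  · exact hC _
  · simpa only [norm_zero] using (norm_nonneg _).trans (hC 0)

lemma tendsto_invQPoch_add (r : ℤ) :
    Tendsto (fun n : ℕ => invQPoch Q (n + r)) atTop (𝓝 (qPochInf Q Q)⁻¹) := by
  have hindex : Tendsto (fun n : ℕ => (n + r).toNat) atTop atTop :=
    tendsto_atTop_mono (fun n => by omega) (tendsto_sub_atTop_nat r.natAbs)
  refine ((tendsto_inv_qPoch_self hQ).comp hindex).congr' ?_
  filter_upwards [eventually_ge_atTop r.natAbs] with n hn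
  rw [Function.comp_apply, invQPoch, if_pos (by omega)]

end InvQPoch

section EulerSums

variable {Y : ℂ} (hY : ‖Y‖ < 1)
include hY

lemma summable_norm_pow_sq_mul_pow_div_qPoch {Q : ℂ} (hQ : ‖Q‖ < 1) (z : ℂ) :
    Summable fun s : ℕ => ‖Y ^ s ^ 2 * z ^ s / qPoch Q Q s‖ := by
  obtain ⟨C, hC⟩ := exists_norm_inv_qPoch_self_le hQ
  refine .of_nonneg_of_le (fun _ => norm_nonneg _) (fun s => ?_)
    ((summable_norm_pow_sq_mul_pow hY z).mul_right C)
  rw [div_eq_mul_inv, norm_mul]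
  gcongr
  exact hC s

theorem tsum_pow_sq_mul_pow_div_qPoch (z : ℂ) :
    ∑' s : ℕ, Y ^ s ^ 2 * z ^ s / qPoch (Y ^ 2) (Y ^ 2) s = qPochInf (-(z * Y)) (Y ^ 2) := by
  have hQ := norm_pow_lt_one hY two_ne_zero
  obtain ⟨C, hC⟩ := exists_norm_invQPoch_le hQ
  have hfinite (N : ℕ) : ∑' s : ℕ, Y ^ s ^ 2 * z ^ s / qPoch (Y ^ 2) (Y ^ 2) s *
      invQPoch (Y ^ 2) (N + -s) =
        qPoch (-(z * Y)) (Y ^ 2) N * (qPoch (Y ^ 2) (Y ^ 2) N)⁻¹ := by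
    simp only [← sub_eq_add_neg, tsum_mul_invQPoch_sub, div_div, ← div_eq_mul_inv,
      ← sum_antidiagonal_pow_sq_mul_pow (qPoch_ne_zero hQ hQ)]
  have hlim := tendsto_tsum_mul_of_norm_le (summable_norm_pow_sq_mul_pow_div_qPoch hY hQ z)
    (fun N s => hC (N + -s)) (fun s => tendsto_invQPoch_add hQ (-s))
  simp only [hfinite] at hlim
  exact mul_right_cancel₀ (inv_ne_zero (qPochInf_ne_zero hQ hQ)) <|
    tendsto_nhds_unique hlim ((tendsto_qPoch hQ _).mul (tendsto_inv_qPoch_self hQ))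

-- Expanding `(-a b Y ^ (2 s + 1); Y²)_∞` by the previous sum gives a double series, whose sum over
-- `s + t = n` is evaluated by the `q`-Chu–Vandermonde formula.
theorem tsum_qPoch_mul_pow_sq_mul_qPochInf (a b : ℂ) :
    ∑' s : ℕ, qPoch a (Y ^ 2) s * (Y ^ s ^ 2 * b ^ s) / qPoch (Y ^ 2) (Y ^ 2) s *
        qPochInf (-(a * b * Y) * (Y ^ 2) ^ s) (Y ^ 2) =
      qPochInf (-(b * Y)) (Y ^ 2) := by
  have hQ := norm_pow_lt_one hY two_ne_zero
  have hne := qPoch_ne_zero hQ hQ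
  let F : ℕ × ℕ → ℂ := fun p =>
    Y ^ p.1 ^ 2 * b ^ p.1 / qPoch (Y ^ 2) (Y ^ 2) p.1 *
      (Y ^ p.2 ^ 2 * (a * b) ^ p.2 / qPoch (Y ^ 2) (Y ^ 2) p.2) *
        (qPoch a (Y ^ 2) p.1 * (Y ^ 2) ^ (p.1 * p.2))
  have hF : Summable F := by
    obtain ⟨C, hC⟩ := exists_norm_qPoch_le hQ a
    have hbound (s t : ℕ) : ‖qPoch a (Y ^ 2) s * (Y ^ 2) ^ (s * t)‖ ≤ C := by
      rw [norm_mul, norm_pow]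
      exact (mul_le_of_le_one_right (norm_nonneg _)
        (pow_le_one₀ (norm_nonneg _) hQ.le)).trans (hC s)
    exact (summable_mul_mul_of_norm_le (summable_norm_pow_sq_mul_pow_div_qPoch hY hQ b)
      (summable_norm_pow_sq_mul_pow_div_qPoch hY hQ (a * b)) hbound :)
  have hdiag (n : ℕ) : ∑ p ∈ antidiagonal n, F p =
      Y ^ n ^ 2 * b ^ n / qPoch (Y ^ 2) (Y ^ 2) n := by
    rw [div_eq_mul_inv, ← sum_antidiagonal_qPoch_mul_pow hne a n, mul_sum]
    refine sum_congr rfl fun p hp => ?_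
    rw [← mem_antidiagonal.mp hp]
    ring
  calc _ = ∑' s, ∑' t, F (s, t) := tsum_congr fun s => by
          rw [show -(a * b * Y) * (Y ^ 2) ^ s = -(a * b * (Y ^ 2) ^ s * Y) by ring,
            ← tsum_pow_sq_mul_pow_div_qPoch hY, ← tsum_mul_left]
          refine tsum_congr fun t => ?_
          ring
    _ = ∑' n : ℕ, Y ^ n ^ 2 * b ^ n / qPoch (Y ^ 2) (Y ^ 2) n := by
          rw [← hF.tsum_prod, tsum_prod_eq_tsum_sum_antidiagonal hF]
          simp only [hdiag]
    _ = qPochInf (-(b * Y)) (Y ^ 2) := tsum_pow_sq_mul_pow_div_qPoch hY b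

lemma tsum_qPoch_mul_pow_sq_div_qPoch_add {a b : ℂ} {d : ℕ}
    (hab : -(a * b * Y) = (Y ^ 2) ^ (d + 1)) :
    ∑' s : ℕ, qPoch a (Y ^ 2) s * (Y ^ s ^ 2 * b ^ s) /
        (qPoch (Y ^ 2) (Y ^ 2) s * qPoch (Y ^ 2) (Y ^ 2) (s + d)) =
      qPochInf (-(b * Y)) (Y ^ 2) / qPochInf (Y ^ 2) (Y ^ 2) := by
  rw [← tsum_qPoch_mul_pow_sq_mul_qPochInf hY a b, ← tsum_div_const]
  refine tsum_congr fun s => ?_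
  rw [hab, ← pow_add, mul_div_assoc (_ / _), show d + 1 + s = s + d + 1 by ring,
    qPochInf_pow_succ_div (norm_pow_lt_one hY two_ne_zero), ← div_eq_mul_inv, div_div]

end EulerSums

section BaileyKernel

/-- The kernel `1 / ((Q; Q)_{n-r} (Q; Q)_{n+r+e})` which relates the two sequences of a Bailey pair
relative to `Q ^ e`; it is defined for every integer `r` and vanishes unless `-n - e ≤ r ≤ n`. -/
noncomputable def baileyKernel (Q : ℂ) (e n : ℕ) (r : ℤ) : ℂ :=
  invQPoch Q (n + (e + r)) * invQPoch Q (n + -r)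

lemma baileyKernel_reflect (Q : ℂ) (e n : ℕ) (r : ℤ) :
    baileyKernel Q e n (-r - e) = baileyKernel Q e n r := by
  unfold baileyKernel
  rw [mul_comm]
  congr 2 <;> ring

lemma baileyKernel_add_natCast (Q : ℂ) (e s ρ : ℕ) :
    baileyKernel Q e (s + ρ) ρ = (qPoch Q Q s * qPoch Q Q (s + (2 * ρ + e)))⁻¹ := by
  rw [baileyKernel, mul_comm, mul_inv, ← invQPoch_natCast, ← invQPoch_natCast]
  congr 2 <;> push_cast <;> ring

lemma baileyKernel_eq_zero_of_lt (Q : ℂ) {e n : ℕ} {r : ℤ} (h : n < r) :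
    baileyKernel Q e n r = 0 := by
  rw [baileyKernel, invQPoch_of_neg Q (by omega : n + -r < 0), mul_zero]

lemma tsum_mul_baileyKernel (Q : ℂ) (u : ℤ → ℂ) (e n : ℕ) :
    ∑' r : ℤ, u r * baileyKernel Q e n r = ∑ p ∈ antidiagonal (2 * n + e),
      u (p.1 - (n + e)) / (qPoch Q Q p.1 * qPoch Q Q p.2) := by
  have hinj : Function.Injective fun s : ℕ => (s : ℤ) - (n + e) := fun s t h => by
    simpa using h
  rw [← hinj.tsum_eq]
  · simp only [← div_div, ← tsum_mul_invQPoch_sub Q (fun s => u (s - (n + e)) / qPoch Q Q s)]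
    refine tsum_congr fun s => ?_
    rw [baileyKernel, ← mul_assoc, div_eq_mul_inv, ← invQPoch_natCast,
      show (n : ℤ) + (e + (s - (n + e))) = s by ring,
      show (n : ℤ) + -(s - (n + e)) = ↑(2 * n + e) - s by push_cast; ring]
  · intro r hr
    by_contra hrange
    have hneg : (n : ℤ) + (e + r) < 0 := by
      by_contra! hpos
      exact hrange ⟨(n + (e + r)).toNat, by dsimp only; omega⟩
    exact hr (by simp only [baileyKernel, invQPoch_of_neg Q hneg, zero_mul, mul_zero])

variable {Q : ℂ} (hQ : ‖Q‖ < 1)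
include hQ

lemma exists_norm_baileyKernel_le : ∃ C, ∀ e n r, ‖baileyKernel Q e n r‖ ≤ C := by
  obtain ⟨C, hC⟩ := exists_norm_invQPoch_le hQ
  exact ⟨C * C, fun _ _ _ => norm_mul_le_of_le (hC _) (hC _)⟩

lemma tendsto_baileyKernel (e : ℕ) (r : ℤ) :
    Tendsto (fun n => baileyKernel Q e n r) atTop
      (𝓝 ((qPochInf Q Q)⁻¹ * (qPochInf Q Q)⁻¹)) :=
  (tendsto_invQPoch_add hQ _).mul (tendsto_invQPoch_add hQ _)

end BaileyKernel

section TripleProduct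

variable {Y z : ℂ}

-- Both sides are products of `1 + z Y ^ (1 - 2 k)` over `k = 1, …, n`.
lemma pow_sq_mul_qPoch_div (hY : Y ≠ 0) (hz : z ≠ 0) (n : ℕ) :
    Y ^ n ^ 2 * qPoch (-(z * Y / (Y ^ 2) ^ n)) (Y ^ 2) n =
      z ^ n * qPoch (-(Y / z)) (Y ^ 2) n := by
  induction n with
  | zero => simp [qPoch_zero]
  | succ n ih =>
    have hshift : -(z * Y / (Y ^ 2) ^ (1 + n)) * (Y ^ 2) ^ 1 = -(z * Y / (Y ^ 2) ^ n) := by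
      field_simp
      ring
    rw [qPoch_succ (-(Y / z)), pow_succ z, mul_mul_mul_comm, ← ih, add_comm n 1, qPoch_add,
      hshift, qPoch_succ, qPoch_zero]
    field_simp
    ring

lemma pow_sq_mul_qPochInf_div (hY : Y ≠ 0) (hY1 : ‖Y‖ < 1) (hz : z ≠ 0) (n : ℕ) :
    Y ^ n ^ 2 * qPochInf (-(z * Y / (Y ^ 2) ^ n)) (Y ^ 2) =
      z ^ n * qPoch (-(Y / z)) (Y ^ 2) n * qPochInf (-(z * Y)) (Y ^ 2) := by
  rw [← pow_sq_mul_qPoch_div hY hz, mul_assoc,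
    ← qPoch_mul_qPochInf (norm_pow_lt_one hY1 two_ne_zero) _ n, neg_mul,
    div_mul_cancel₀ _ (pow_ne_zero n (pow_ne_zero 2 hY))]

lemma tsum_zpow_sq_mul_zpow_mul_baileyKernel (hY : Y ≠ 0) (hY1 : ‖Y‖ < 1) (hz : z ≠ 0) (n : ℕ) :
    ∑' r : ℤ, Y ^ r ^ 2 * z ^ r * baileyKernel (Y ^ 2) 0 n r =
      qPoch (-(Y / z)) (Y ^ 2) n * qPoch (-(z * Y)) (Y ^ 2) n /
        qPoch (Y ^ 2) (Y ^ 2) (2 * n) := by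
  have hQ := norm_pow_lt_one hY1 two_ne_zero
  apply mul_left_cancel₀ (pow_ne_zero n hz)
  calc z ^ n * ∑' r : ℤ, Y ^ r ^ 2 * z ^ r * baileyKernel (Y ^ 2) 0 n r
      = Y ^ n ^ 2 * ∑ p ∈ antidiagonal (2 * n), Y ^ p.1 ^ 2 * (z / (Y ^ 2) ^ n) ^ p.1 /
          (qPoch (Y ^ 2) (Y ^ 2) p.1 * qPoch (Y ^ 2) (Y ^ 2) p.2) := by
        rw [tsum_mul_baileyKernel, add_zero, mul_sum, mul_sum]
        refine sum_congr rfl fun p _ => ?_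
        rw [mul_div_assoc', mul_div_assoc']
        congr 1
        simp only [div_zpow, CharP.cast_eq_zero, add_zero, zpow_sub₀ hz, ← zpow_natCast,
          ← zpow_mul, sub_sq, zpow_add₀ hY, zpow_sub₀ hY, Nat.cast_pow]
        field_simp
        congr 1
        push_cast
        ring
    _ = Y ^ n ^ 2 * (qPoch (-(z * Y / (Y ^ 2) ^ n)) (Y ^ 2) (n + n) /
          qPoch (Y ^ 2) (Y ^ 2) (2 * n)) := by
        rw [sum_antidiagonal_pow_sq_mul_pow (qPoch_ne_zero hQ hQ), div_mul_eq_mul_div, two_mul]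
    _ = z ^ n * (qPoch (-(Y / z)) (Y ^ 2) n * qPoch (-(z * Y)) (Y ^ 2) n /
          qPoch (Y ^ 2) (Y ^ 2) (2 * n)) := by
        rw [qPoch_add, neg_mul, div_mul_cancel₀ _ (pow_ne_zero n (pow_ne_zero 2 hY)),
          mul_div_assoc', ← mul_assoc, pow_sq_mul_qPoch_div hY hz, mul_div_assoc', mul_assoc]

theorem tsum_zpow_sq_mul_zpow (hY : Y ≠ 0) (hY1 : ‖Y‖ < 1) (hz : z ≠ 0) :
    ∑' r : ℤ, Y ^ r ^ 2 * z ^ r =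
      qPochInf (-(Y / z)) (Y ^ 2) * qPochInf (-(z * Y)) (Y ^ 2) * qPochInf (Y ^ 2) (Y ^ 2) := by
  have hQ := norm_pow_lt_one hY1 two_ne_zero
  have hP := qPochInf_ne_zero hQ hQ
  obtain ⟨C, hC⟩ := exists_norm_baileyKernel_le hQ
  have hlim := tendsto_tsum_mul_of_norm_le (summable_norm_zpow_sq_mul_zpow hY1 z)
    (hC 0) (tendsto_baileyKernel hQ 0)
  simp only [tsum_zpow_sq_mul_zpow_mul_baileyKernel hY hY1 hz] at hlim
  have hfinite := tendsto_nhds_unique hlim (((tendsto_qPoch hQ _).mul (tendsto_qPoch hQ _)).div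
    ((tendsto_qPoch hQ _).comp (tendsto_id.const_mul_atTop' two_pos)) hP)
  rw [← mul_inv, ← div_eq_mul_inv, div_eq_div_iff (mul_ne_zero hP hP) hP, ← mul_assoc] at hfinite
  exact mul_right_cancel₀ hP hfinite

end TripleProduct

section BaileyPair

variable {Y : ℂ} {e : ℕ}

lemma tsum_mul_baileyKernel_natCast (hY1 : ‖Y‖ < 1) (e ρ : ℕ) :
    ∑' n : ℕ, Y ^ (n ^ 2 + e * n) * qPoch (-Y ^ (e + 1)) (Y ^ 2) n *
        baileyKernel (Y ^ 2) e n ρ =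
      Y ^ (ρ ^ 2 + e * ρ) * (qPochInf (-Y ^ (e + 1)) (Y ^ 2) / qPochInf (Y ^ 2) (Y ^ 2)) := by
  have hshift : -Y ^ (e + 1) * (Y ^ 2) ^ ρ = -(Y ^ (2 * ρ + e) * Y) := by ring
  rw [← (add_left_injective ρ).tsum_eq]
  · rw [← qPoch_mul_qPochInf (norm_pow_lt_one hY1 two_ne_zero) _ ρ, hshift, mul_div_assoc,
      ← tsum_qPoch_mul_pow_sq_div_qPoch_add hY1
        (a := -(Y ^ (2 * ρ + e) * Y)) (d := 2 * ρ + e) (by ring), ← mul_assoc, ← tsum_mul_left]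
    refine tsum_congr fun s => ?_
    rw [baileyKernel_add_natCast, add_comm s ρ, qPoch_add, hshift]
    ring
  · intro n hn
    by_contra hrange
    have hlt : n < ρ := not_le.mp fun hle => hrange ⟨n - ρ, Nat.sub_add_cancel hle⟩
    exact hn (by simp only [baileyKernel_eq_zero_of_lt _ (Nat.cast_lt.mpr hlt), mul_zero])

-- For `e ≤ 1` the reflection `r ↦ -r - e` takes every negative `r` to a nonnegative one.
lemma tsum_mul_baileyKernel_intCast (hY1 : ‖Y‖ < 1) (he : e ≤ 1) (r : ℤ) :
    ∑' n : ℕ, Y ^ (n ^ 2 + e * n) * qPoch (-Y ^ (e + 1)) (Y ^ 2) n *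
        baileyKernel (Y ^ 2) e n r =
      Y ^ (r ^ 2 + e * r) * (qPochInf (-Y ^ (e + 1)) (Y ^ 2) / qPochInf (Y ^ 2) (Y ^ 2)) := by
  have hnat (ρ : ℕ) := tsum_mul_baileyKernel_natCast hY1 e ρ
  simp only [← zpow_natCast Y (_ + _), Nat.cast_add, Nat.cast_pow, Nat.cast_mul] at hnat ⊢
  obtain hr | hr := le_or_gt 0 r
  · lift r to ℕ using hr
    exact hnat r
  · obtain ⟨ρ, hρ⟩ := Int.eq_ofNat_of_zero_le (by omega : 0 ≤ -r - e)
    simp only [← baileyKernel_reflect _ e _ r, hρ, hnat]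
    rw [← hρ]
    ring_nf

lemma inv_qPoch_eq_tsum_baileyKernel (hY : Y ≠ 0) (hY1 : ‖Y‖ < 1) (e n : ℕ) :
    (qPoch Y Y (2 * n + e))⁻¹ =
      ∑' r : ℤ, Y ^ triangle (-(2 * r) - e) * baileyKernel (Y ^ 2) e n r := by
  have hQ := norm_pow_lt_one hY1 two_ne_zero
  rw [tsum_mul_baileyKernel _ (fun r => Y ^ triangle (-(2 * r) - e)),
    ← sum_antidiagonal_zpow_triangle hY (qPoch_ne_zero hQ hQ)]
  refine sum_congr rfl fun p hp => ?_
  have hp2 : (p.2 : ℤ) = 2 * n + e - p.1 := by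
    rw [HasAntidiagonal.mem_antidiagonal] at hp
    omega
  rw [hp2]
  congr 3
  ring

lemma zpow_triangle_neg_two_mul_sub (hY : Y ≠ 0) (he : e ≤ 1) (r : ℤ) :
    Y ^ triangle (-(2 * r) - e) = (Y ^ 2) ^ r ^ 2 * (Y ^ (2 * e - 1 : ℤ)) ^ r := by
  rw [← zpow_natCast, ← zpow_mul, ← zpow_mul, ← zpow_add₀ hY, triangle]
  congr 1
  refine Int.ediv_eq_of_eq_mul_left two_ne_zero ?_
  interval_cases e <;> push_cast <;> ring

-- Pair the two Bailey sequences, exchange the summations, and apply the Jacobi triple product.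
theorem tsum_pow_mul_qPoch_neg_div_qPoch (hY : Y ≠ 0) (hY1 : ‖Y‖ < 1) (he : e ≤ 1) :
    ∑' n : ℕ, Y ^ (n ^ 2 + e * n) * qPoch (-Y ^ (e + 1)) (Y ^ 2) n / qPoch Y Y (2 * n + e) =
      qPochInf (-Y ^ (e + 1)) (Y ^ 2) / qPochInf (Y ^ 2) (Y ^ 2) *
        (qPochInf (-Y ^ (4 - 3 * e)) (Y ^ 6) * qPochInf (-Y ^ (3 * e + 2)) (Y ^ 6) *
          qPochInf (Y ^ 6) (Y ^ 6)) := by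
  have hQ := norm_pow_lt_one hY1 two_ne_zero
  obtain ⟨C, hC⟩ := exists_norm_baileyKernel_le hQ
  have hα : Summable fun n : ℕ =>
      ‖Y ^ (n ^ 2 + e * n) * qPoch (-Y ^ (e + 1)) (Y ^ 2) n‖ := by
    obtain ⟨D, hD⟩ := exists_norm_qPoch_le hQ (-Y ^ (e + 1))
    refine .of_nonneg_of_le (fun _ => norm_nonneg _) (fun n => ?_)
      ((summable_norm_pow_sq_mul_pow hY1 (Y ^ e)).mul_right D)
    rw [norm_mul, pow_add, pow_mul]
    gcongr
    exact hD n
  have hβ : Summable fun r : ℤ => ‖Y ^ triangle (-(2 * r) - e)‖ := by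
    simpa only [zpow_triangle_neg_two_mul_sub hY he] using summable_norm_zpow_sq_mul_zpow hQ _
  simp only [div_eq_mul_inv _ (qPoch _ _ _), inv_qPoch_eq_tsum_baileyKernel hY hY1]
  rw [tsum_mul_tsum_comm hα hβ (hC e)]
  have hexp (r : ℤ) : Y ^ triangle (-(2 * r) - e) * Y ^ (r ^ 2 + e * r) =
      (Y ^ 3) ^ r ^ 2 * (Y ^ (3 * e - 1 : ℤ)) ^ r := by
    simp only [zpow_triangle_neg_two_mul_sub hY he, ← zpow_natCast, ← zpow_mul, ← zpow_add₀ hY]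
    congr 1
    push_cast
    ring
  simp only [tsum_mul_baileyKernel_intCast hY1 he, ← mul_assoc, hexp, tsum_mul_right]
  rw [tsum_zpow_sq_mul_zpow (pow_ne_zero 3 hY) (norm_pow_lt_one hY1 three_ne_zero)
    (zpow_ne_zero _ hY), ← pow_mul, mul_comm, ← zpow_natCast Y 3, ← zpow_sub₀ hY,
    ← zpow_add₀ hY, ← zpow_natCast Y (3 * e + 2), ← zpow_natCast Y (4 - 3 * e),
    Nat.cast_sub (by omega)]
  push_cast
  ring_nf

end BaileyPair

section EtaQuotients

lemma J_pow (q : ℂ) (m n : ℕ) : J (q ^ m) n = J q (m * n) := by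
  simp only [J, pow_mul]

variable {q : ℂ} (hq1 : ‖q‖ < 1) {n : ℕ} (hn : n ≠ 0)
include hq1 hn

lemma J_ne_zero : J q n ≠ 0 :=
  qPochInf_ne_zero (norm_pow_lt_one hq1 hn) (norm_pow_lt_one hq1 hn)

lemma qPochInf_neg_pow_self : qPochInf (-q ^ n) (q ^ n) = J q (2 * n) / J q n := by
  rw [eq_div_iff (J_ne_zero hq1 hn), mul_comm, J,
    qPochInf_mul_qPochInf_neg (norm_pow_lt_one hq1 hn), ← pow_mul, mul_comm n, J]

lemma qPochInf_neg_pow_two_mul :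
    qPochInf (-q ^ n) (q ^ (2 * n)) = J q (2 * n) ^ 2 / (J q n * J q (4 * n)) := by
  have h2n : 2 * n ≠ 0 := mul_ne_zero two_ne_zero hn
  have hdissect := qPochInf_eq_prod (norm_pow_lt_one hq1 hn) (-q ^ n) two_ne_zero
  rw [prod_range_succ, prod_range_one, pow_zero, mul_one, pow_one, neg_mul, ← sq, ← pow_mul,
    mul_comm n, qPochInf_neg_pow_self hq1 hn, qPochInf_neg_pow_self hq1 h2n, ← mul_assoc,
    show 2 * 2 = 4 from rfl] at hdissect
  have hJn := J_ne_zero hq1 hn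
  have hJ2n := J_ne_zero hq1 h2n
  have hJ4n := J_ne_zero hq1 (mul_ne_zero four_ne_zero hn)
  field_simp at hdissect ⊢
  exact hdissect.symm

end EtaQuotients

section SlaterIdentities

variable {Y : ℂ}

lemma qPochInf_neg_pow_two_mul_neg_pow_four (hY1 : ‖Y‖ < 1) :
    qPochInf (-Y ^ 2) (Y ^ 6) * qPochInf (-Y ^ 4) (Y ^ 6) =
      J Y 4 * J Y 6 / (J Y 2 * J Y 12) := by
  have hdissect := qPochInf_eq_prod (norm_pow_lt_one hY1 two_ne_zero) (-Y ^ 2) three_ne_zero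
  simp only [prod_range_succ, prod_range_zero, one_mul, neg_mul, ← pow_mul, ← pow_add] at hdissect
  norm_num only at hdissect
  rw [qPochInf_neg_pow_self hY1 two_ne_zero, qPochInf_neg_pow_self hY1 (by norm_num)] at hdissect
  have hJ2 := J_ne_zero hY1 (n := 2) (by norm_num)
  have hJ6 := J_ne_zero hY1 (n := 6) (by norm_num)
  have hJ12 := J_ne_zero hY1 (n := 12) (by norm_num)
  norm_num only at hdissect
  field_simp at hdissect ⊢
  exact hdissect.symm

lemma qPochInf_neg_mul_neg_pow_five (hY1 : ‖Y‖ < 1) :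
    qPochInf (-Y) (Y ^ 6) * qPochInf (-Y ^ 5) (Y ^ 6) =
      J Y 2 ^ 2 * J Y 3 * J Y 12 / (J Y 1 * J Y 4 * J Y 6 ^ 2) := by
  have hdissect := qPochInf_eq_prod (norm_pow_lt_one hY1 two_ne_zero) (-Y ^ 1) three_ne_zero
  have h1 := qPochInf_neg_pow_two_mul hY1 one_ne_zero
  have h3 := qPochInf_neg_pow_two_mul hY1 three_ne_zero
  simp only [prod_range_succ, prod_range_zero, one_mul, neg_mul, ← pow_mul, ← pow_add] at hdissect
  norm_num only [pow_one] at hdissect h1 h3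
  rw [h1, h3] at hdissect
  have hJ1 := J_ne_zero hY1 (n := 1) (by norm_num)
  have hJ3 := J_ne_zero hY1 (n := 3) (by norm_num)
  have hJ4 := J_ne_zero hY1 (n := 4) (by norm_num)
  have hJ6 := J_ne_zero hY1 (n := 6) (by norm_num)
  have hJ12 := J_ne_zero hY1 (n := 12) (by norm_num)
  field_simp at hdissect ⊢
  rw [hdissect]

theorem tsum_pow_sq_mul_qPoch_neg_div_qPoch (hY : Y ≠ 0) (hY1 : ‖Y‖ < 1) :
    ∑' n : ℕ, Y ^ n ^ 2 * qPoch (-Y) (Y ^ 2) n / qPoch Y Y (2 * n) =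
      J Y 6 ^ 2 / (J Y 1 * J Y 12) := by
  have hslater := tsum_pow_mul_qPoch_neg_div_qPoch hY hY1 (e := 0) zero_le_one
  have hprod := qPochInf_neg_pow_two_mul_neg_pow_four hY1
  have hneg := qPochInf_neg_pow_two_mul hY1 one_ne_zero
  have hJ2 := J_ne_zero hY1 (n := 2) (by norm_num)
  have hJ4 := J_ne_zero hY1 (n := 4) (by norm_num)
  have hJ6 := J_ne_zero hY1 (n := 6) (by norm_num)
  norm_num only [zero_mul, add_zero, zero_add, pow_one] at hslater hneg
  rw [hslater, hneg, mul_comm (qPochInf (-Y ^ 4) _), hprod, ← J, ← J]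
  field_simp

theorem tsum_pow_mul_qPoch_neg_sq_div_qPoch (hY : Y ≠ 0) (hY1 : ‖Y‖ < 1) :
    ∑' n : ℕ, Y ^ (n ^ 2 + n) * qPoch (-Y ^ 2) (Y ^ 2) n / qPoch Y Y (2 * n + 1) =
      J Y 3 * J Y 12 / (J Y 1 * J Y 6) := by
  have hslater := tsum_pow_mul_qPoch_neg_div_qPoch hY hY1 (e := 1) le_rfl
  have hprod := qPochInf_neg_mul_neg_pow_five hY1
  have hneg := qPochInf_neg_pow_self hY1 two_ne_zero
  have hJ2 := J_ne_zero hY1 (n := 2) (by norm_num)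
  have hJ4 := J_ne_zero hY1 (n := 4) (by norm_num)
  have hJ6 := J_ne_zero hY1 (n := 6) (by norm_num)
  norm_num only [one_mul] at hslater hneg
  rw [hslater, hneg, pow_one, hprod, ← J, ← J]
  field_simp

end SlaterIdentities

section QuadrupleSeries

/-- The summand, at `p = (i, j, k, l)`, of the quadruple series `F(x, y, z, t; Y²)`. The exponent of
`Y` is a nonnegative integer, but is written in `ℤ` because of the subtractions. -/
noncomputable def quadSummand (Y x y z t : ℂ) (p : ℕ × ℕ × ℕ × ℕ) : ℂ :=
  Y ^ ((p.1 ^ 2 + p.2.1 ^ 2 + p.2.2.1 ^ 2 + p.2.2.2 ^ 2 -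
      (p.1 + p.2.1 + p.2.2.1) * p.2.2.2 : ℤ)) *
    (x ^ p.1 * y ^ p.2.1 * z ^ p.2.2.1 * t ^ p.2.2.2) /
    (qPoch (Y ^ 2) (Y ^ 2) p.1 * qPoch (Y ^ 2) (Y ^ 2) p.2.1 * qPoch (Y ^ 2) (Y ^ 2) p.2.2.1 *
      qPoch (Y ^ 2) (Y ^ 2) p.2.2.2)

lemma quadSummand_sq_one_one_inv {q : ℂ} (hq : q ≠ 0) (i j k l : ℕ) :
    quadSummand (q ^ 2) 1 1 (q ^ 2)⁻¹ q (i, j, k, l) =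
      q ^ (2 * i ^ 2 + 2 * j ^ 2 + 2 * k ^ 2 + 2 * l ^ 2 - 2 * i * l - 2 * j * l - 2 * k * l -
          2 * k + l : ℤ) /
        (qPoch (q ^ 4) (q ^ 4) i * qPoch (q ^ 4) (q ^ 4) j * qPoch (q ^ 4) (q ^ 4) k *
          qPoch (q ^ 4) (q ^ 4) l) := by
  simp only [quadSummand, one_pow, one_mul, inv_pow, ← pow_mul, Nat.reduceMul]
  congr 1
  simp only [← zpow_natCast, ← zpow_mul, ← zpow_neg, ← zpow_add₀ hq]
  congr 1
  push_cast
  ring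

variable {Y : ℂ} (hY : Y ≠ 0) (hY1 : ‖Y‖ < 1)
include hY hY1

-- The quadratic form in the exponent dominates `(i² + j² + k² + l²) / 8`, so the series is bounded
-- by a product of four single series in an eighth root of `Y`.
lemma summable_quadSummand (x y z t : ℂ) : Summable (quadSummand Y x y z t) := by
  obtain ⟨w, hw⟩ := IsAlgClosed.exists_pow_nat_eq Y (by norm_num : 0 < 8)
  have hw0 : 0 < ‖w‖ := norm_pos_iff.mpr (by rintro rfl; exact hY (by rw [← hw]; norm_num))
  have hw1 : ‖w‖ < 1 := by
    rwa [← hw, norm_pow, pow_lt_one_iff_of_nonneg (norm_nonneg w) (by norm_num)] at hY1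
  have hsingle (u : ℂ) :=
    summable_norm_pow_sq_mul_pow_div_qPoch hw1 (norm_pow_lt_one hY1 two_ne_zero) u
  refine Summable.of_norm_bounded
    ((hsingle x).mul_norm ((hsingle y).mul_norm ((hsingle z).mul_norm (hsingle t)))) ?_
  rintro ⟨i, j, k, l⟩
  have hform : (i ^ 2 + j ^ 2 + k ^ 2 + l ^ 2 : ℤ) ≤
      8 * (i ^ 2 + j ^ 2 + k ^ 2 + l ^ 2 - (i + j + k) * l) := by
    nlinarith [sq_nonneg (7 * i - 4 * l : ℤ), sq_nonneg (7 * j - 4 * l : ℤ),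
      sq_nonneg (7 * k - 4 * l : ℤ), sq_nonneg (l : ℤ)]
  have hpow : ‖Y ^ (i ^ 2 + j ^ 2 + k ^ 2 + l ^ 2 - (i + j + k) * l : ℤ)‖ ≤
      ‖w ^ i ^ 2 * w ^ j ^ 2 * w ^ k ^ 2 * w ^ l ^ 2‖ := by
    rw [← hw, ← zpow_natCast, ← zpow_mul, norm_zpow, ← pow_add, ← pow_add, ← pow_add, norm_pow,
      ← zpow_natCast]
    exact zpow_le_zpow_right_of_le_one₀ hw0 hw1.le (by exact_mod_cast hform)
  calc ‖quadSummand Y x y z t (i, j, k, l)‖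
    _ ≤ ‖w ^ i ^ 2 * w ^ j ^ 2 * w ^ k ^ 2 * w ^ l ^ 2‖ * ‖x ^ i * y ^ j * z ^ k * t ^ l‖ /
        ‖qPoch (Y ^ 2) (Y ^ 2) i * qPoch (Y ^ 2) (Y ^ 2) j * qPoch (Y ^ 2) (Y ^ 2) k *
          qPoch (Y ^ 2) (Y ^ 2) l‖ := by
      rw [quadSummand, norm_div, norm_mul]
      gcongr
    _ = _ := by
      simp only [norm_mul, norm_div]
      ring

lemma hasSum_quadSummand_fiber (x y z t : ℂ) (l : ℕ) :
    HasSum (fun p : ℕ × ℕ × ℕ => quadSummand Y x y z t (p.1, p.2.1, p.2.2, l))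
      (Y ^ l ^ 2 * t ^ l / qPoch (Y ^ 2) (Y ^ 2) l *
        (qPochInf (-(x * Y / Y ^ l)) (Y ^ 2) * (qPochInf (-(y * Y / Y ^ l)) (Y ^ 2) *
          qPochInf (-(z * Y / Y ^ l)) (Y ^ 2)))) := by
  have hQ := norm_pow_lt_one hY1 two_ne_zero
  have hsummable (u : ℂ) := summable_norm_pow_sq_mul_pow_div_qPoch hY1 hQ (u / Y ^ l)
  have heuler (u : ℂ) : qPochInf (-(u * Y / Y ^ l)) (Y ^ 2) =
      ∑' s : ℕ, Y ^ s ^ 2 * (u / Y ^ l) ^ s / qPoch (Y ^ 2) (Y ^ 2) s := by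
    rw [tsum_pow_sq_mul_pow_div_qPoch hY1, div_mul_eq_mul_div]
  rw [heuler x, heuler y, heuler z]
  refine ((hasSum_mul_mul_of_summable_norm (hsummable x) (hsummable y) (hsummable z)).mul_left
    _).congr_fun ?_
  rintro ⟨i, j, k⟩
  have hexponent : Y ^ (i ^ 2 + j ^ 2 + k ^ 2 + l ^ 2 - (i + j + k) * l : ℤ) =
      Y ^ i ^ 2 * Y ^ j ^ 2 * Y ^ k ^ 2 * Y ^ l ^ 2 /
        ((Y ^ l) ^ i * (Y ^ l) ^ j * (Y ^ l) ^ k) := by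
    simp only [← pow_mul, ← pow_add]
    rw [← zpow_natCast, ← zpow_natCast, ← zpow_sub₀ hY]
    congr 1
    push_cast
    ring
  rw [quadSummand, hexponent]
  simp only [div_pow]
  ring

theorem hasSum_quadSummand (x y z t : ℂ) :
    HasSum (fun l : ℕ => Y ^ l ^ 2 * t ^ l / qPoch (Y ^ 2) (Y ^ 2) l *
        (qPochInf (-(x * Y / Y ^ l)) (Y ^ 2) * (qPochInf (-(y * Y / Y ^ l)) (Y ^ 2) *
          qPochInf (-(z * Y / Y ^ l)) (Y ^ 2))))
      (∑' p, quadSummand Y x y z t p) := by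
  let lastToFirst : ℕ × ℕ × ℕ × ℕ ≃ ℕ × ℕ × ℕ × ℕ :=
    { toFun p := (p.2.1, p.2.2.1, p.2.2.2, p.1)
      invFun p := (p.2.2.2, p.1, p.2.1, p.2.2.1) }
  exact (lastToFirst.hasSum_iff.mpr (summable_quadSummand hY hY1 x y z t).hasSum).prod_fiberwise
    (hasSum_quadSummand_fiber hY hY1 x y z t)

lemma pow_sq_mul_qPochInf_neg_div_pow_two_mul (m : ℕ) :
    Y ^ m ^ 2 * qPochInf (-(Y / Y ^ (2 * m))) (Y ^ 2) =
      qPoch (-Y) (Y ^ 2) m * qPochInf (-Y) (Y ^ 2) := by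
  simpa only [one_mul, one_pow, div_one, ← pow_mul] using
    pow_sq_mul_qPochInf_div hY hY1 one_ne_zero m

lemma pow_sq_add_mul_qPochInf_neg_div_pow_two_mul_add_one (m : ℕ) :
    Y ^ (m ^ 2 + m) * qPochInf (-(Y / Y ^ (2 * m + 1))) (Y ^ 2) =
      2 * (qPoch (-Y ^ 2) (Y ^ 2) m * qPochInf (-Y ^ 2) (Y ^ 2)) := by
  have hshift := pow_sq_mul_qPochInf_div hY hY1 (inv_ne_zero hY) m
  rw [inv_mul_cancel₀ hY, qPochInf_neg_one (norm_pow_lt_one hY1 two_ne_zero), div_inv_eq_mul, ← sq,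
    inv_pow, ← pow_mul] at hshift
  rw [pow_succ' Y, div_mul_cancel_left₀ hY, ← one_div, pow_add, mul_right_comm, hshift]
  field_simp

theorem hasSum_tsum_quadSummand_one_one_inv (t : ℂ) :
    HasSum (fun l : ℕ => Y ^ l ^ 2 * t ^ l / qPoch (Y ^ 2) (Y ^ 2) l *
        (qPochInf (-(Y / Y ^ l)) (Y ^ 2) ^ 2 * qPochInf (-(Y / Y ^ (l + 1))) (Y ^ 2)))
      (∑' p, quadSummand Y 1 1 Y⁻¹ t p) := by
  refine (hasSum_quadSummand hY hY1 1 1 Y⁻¹ t).congr_fun fun l => ?_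
  rw [one_mul, inv_mul_cancel₀ hY, pow_succ' Y l, div_mul_cancel_left₀ hY, one_div]
  ring

variable {t : ℂ} (ht : t ^ 2 = Y)
include ht

lemma quadSummand_fiber_two_mul (m : ℕ) :
    Y ^ (2 * m) ^ 2 * t ^ (2 * m) / qPoch (Y ^ 2) (Y ^ 2) (2 * m) *
        (qPochInf (-(Y / Y ^ (2 * m))) (Y ^ 2) ^ 2 *
          qPochInf (-(Y / Y ^ (2 * m + 1))) (Y ^ 2)) =
      2 * qPochInf (-Y) (Y ^ 2) ^ 2 * qPochInf (-Y ^ 2) (Y ^ 2) *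
        (Y ^ m ^ 2 * qPoch (-Y) (Y ^ 2) m / qPoch Y Y (2 * m)) := by
  have hQ := norm_pow_lt_one hY1 two_ne_zero
  have hodd := qPoch_ne_zero (by rwa [norm_neg] : ‖-Y‖ < 1) hQ m
  have heven := qPoch_ne_zero (by rwa [norm_neg] : ‖-Y ^ 2‖ < 1) hQ m
  have hpow : Y ^ (2 * m) ^ 2 * t ^ (2 * m) = Y ^ m ^ 2 * (Y ^ m ^ 2) ^ 2 * Y ^ (m ^ 2 + m) := by
    rw [pow_mul t, ht]
    ring
  rw [hpow, ← qPoch_mul_qPoch_neg, qPoch_two_mul (-Y), neg_mul, ← sq]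
  calc _ = Y ^ m ^ 2 * (Y ^ m ^ 2 * qPochInf (-(Y / Y ^ (2 * m))) (Y ^ 2)) ^ 2 *
          (Y ^ (m ^ 2 + m) * qPochInf (-(Y / Y ^ (2 * m + 1))) (Y ^ 2)) /
          (qPoch Y Y (2 * m) * (qPoch (-Y) (Y ^ 2) m * qPoch (-Y ^ 2) (Y ^ 2) m)) := by ring
    _ = _ := by
      rw [pow_sq_mul_qPochInf_neg_div_pow_two_mul hY hY1,
        pow_sq_add_mul_qPochInf_neg_div_pow_two_mul_add_one hY hY1]
      field_simp

lemma quadSummand_fiber_two_mul_add_one (m : ℕ) :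
    Y ^ (2 * m + 1) ^ 2 * t ^ (2 * m + 1) / qPoch (Y ^ 2) (Y ^ 2) (2 * m + 1) *
        (qPochInf (-(Y / Y ^ (2 * m + 1))) (Y ^ 2) ^ 2 *
          qPochInf (-(Y / Y ^ (2 * m + 1 + 1))) (Y ^ 2)) =
      4 * t * qPochInf (-Y ^ 2) (Y ^ 2) ^ 2 * qPochInf (-Y) (Y ^ 2) *
        (Y ^ (m ^ 2 + m) * qPoch (-Y ^ 2) (Y ^ 2) m / qPoch Y Y (2 * m + 1)) := by
  have hQ := norm_pow_lt_one hY1 two_ne_zero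
  have hodd := qPoch_ne_zero (by rwa [norm_neg] : ‖-Y‖ < 1) hQ (m + 1)
  have heven := qPoch_ne_zero (by rwa [norm_neg] : ‖-Y ^ 2‖ < 1) hQ m
  have hpow : Y ^ (2 * m + 1) ^ 2 * t ^ (2 * m + 1) =
      t * Y ^ (m ^ 2 + m) * (Y ^ (m ^ 2 + m)) ^ 2 * Y ^ (m + 1) ^ 2 := by
    rw [pow_succ t, pow_mul t, ht]
    ring
  have hdenom : qPoch (-Y) Y (2 * m + 1) =
      qPoch (-Y) (Y ^ 2) (m + 1) * qPoch (-Y ^ 2) (Y ^ 2) m := by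
    rw [qPoch_succ, qPoch_two_mul, qPoch_succ]
    ring_nf
  rw [hpow, ← qPoch_mul_qPoch_neg, hdenom, show 2 * m + 1 + 1 = 2 * (m + 1) from rfl]
  calc _ = t * Y ^ (m ^ 2 + m) *
          (Y ^ (m ^ 2 + m) * qPochInf (-(Y / Y ^ (2 * m + 1))) (Y ^ 2)) ^ 2 *
          (Y ^ (m + 1) ^ 2 * qPochInf (-(Y / Y ^ (2 * (m + 1)))) (Y ^ 2)) /
          (qPoch Y Y (2 * m + 1) * (qPoch (-Y) (Y ^ 2) (m + 1) * qPoch (-Y ^ 2) (Y ^ 2) m)) := by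
        ring
    _ = _ := by
      rw [pow_sq_mul_qPochInf_neg_div_pow_two_mul hY hY1,
        pow_sq_add_mul_qPochInf_neg_div_pow_two_mul_add_one hY hY1]
      field_simp
      ring

theorem tsum_quadSummand_one_one_inv :
    ∑' p, quadSummand Y 1 1 Y⁻¹ t p =
      2 * J Y 2 ^ 3 * J Y 6 ^ 2 / (J Y 1 ^ 3 * J Y 4 * J Y 12) +
        4 * t * J Y 3 * J Y 4 * J Y 12 / (J Y 1 ^ 2 * J Y 6) := by
  have hseries := hasSum_tsum_quadSummand_one_one_inv hY hY1 t
  have hneg := qPochInf_neg_pow_two_mul hY1 one_ne_zero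
  have hneg_sq := qPochInf_neg_pow_self hY1 two_ne_zero
  norm_num only [pow_one] at hneg hneg_sq
  rw [← hseries.tsum_eq, tsum_eq_tsum_even_add_tsum_odd hseries.summable]
  simp only [quadSummand_fiber_two_mul hY hY1 ht, quadSummand_fiber_two_mul_add_one hY hY1 ht,
    tsum_mul_left]
  rw [tsum_pow_sq_mul_qPoch_neg_div_qPoch hY hY1, tsum_pow_mul_qPoch_neg_sq_div_qPoch hY hY1,
    hneg, hneg_sq]
  have hJ1 := J_ne_zero hY1 (n := 1) (by norm_num)
  have hJ2 := J_ne_zero hY1 (n := 2) (by norm_num)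
  have hJ4 := J_ne_zero hY1 (n := 4) (by norm_num)
  field_simp

end QuadrupleSeries

theorem stmt_3 (q : ℂ) (h0 : 0 < ‖q‖) (h1 : ‖q‖ < 1) :
    (∑' p : ℕ × ℕ × ℕ × ℕ,
      (fun (i j k l : ℕ) =>
        q ^ ((2*(i:ℤ)^2 + 2*(j:ℤ)^2 + 2*(k:ℤ)^2 + 2*(l:ℤ)^2 - 2*(i:ℤ)*(l:ℤ) - 2*(j:ℤ)*(l:ℤ) - 2*(k:ℤ)*(l:ℤ) - 2*(k:ℤ) + (l:ℤ)) : ℤ) /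
          (qPoch (q ^ 4) (q ^ 4) i * qPoch (q ^ 4) (q ^ 4) j * qPoch (q ^ 4) (q ^ 4) k * qPoch (q ^ 4) (q ^ 4) l))
        p.1 p.2.1 p.2.2.1 p.2.2.2)
    = 2 * (J q 4)^3 * (J q 12)^2 / ((J q 2)^3 * J q 8 * J q 24)
      + 4 * q * J q 6 * J q 8 * J q 24 / ((J q 2)^2 * J q 12) := by
  have hq : q ≠ 0 := norm_pos_iff.mp h0
  have hseries := tsum_quadSummand_one_one_inv (pow_ne_zero 2 hq)
    (norm_pow_lt_one h1 two_ne_zero) rfl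
  simp only [J_pow, Nat.reduceMul] at hseries
  exact (tsum_congr fun ⟨i, j, k, l⟩ => (quadSummand_sq_one_one_inv hq i j k l).symm).trans hseries
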